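/- Let β,γ ∈ ℝ with β²+γ² > 0 and, for ω ∈ H²(S²) with zero mean, define the linearized operator Lω = (1/2)(3β√(5/π)cosθ + γ√(3/π))·(1 + 6Δ⁻¹)∂_φω, where Δ⁻¹ is the inverse of the Laplace–Beltrami operator on mean-zero functions. Then Lω = 0 if and only if ω = ω₀ + ω₂ where ω₀ is zonal and ω₂ ∈ span{Y₂^m : |m| ≤ 2}. -/

import Mathlib

open MeasureTheory
open scoped ENNReal

noncomputable section

/-- Functions on the unit sphere, represented in colatitude-longitude coordinates `(θ, φ)`. -/
abbrev SphereFun : Type := ℝ → ℝ → ℝ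

/-- The `L²` inner product on the sphere:
`⟨u,v⟩ = ∫₀^{2π} ∫₀^π u v sin θ dθ dφ`. -/
def sInner (u v : SphereFun) : ℝ :=
  ∫ φ in (0:ℝ)..(2*Real.pi), ∫ θ in (0:ℝ)..Real.pi, u θ φ * v θ φ * Real.sin θ

/-- Legendre polynomials via Rodrigues' formula. -/
def legP (n : ℕ) (s : ℝ) : ℝ :=
  (1 / ((2:ℝ)^n * (Nat.factorial n : ℝ))) * iteratedDeriv n (fun x : ℝ => (x^2 - 1)^n) s

/-- Associated Legendre functions `P_n^m`. -/
def assocLegP (n m : ℕ) (s : ℝ) : ℝ :=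
  (-1 : ℝ)^m * (1 - s^2) ^ ((m : ℝ)/2) * iteratedDeriv m (legP n) s

/-- Real spherical harmonics `Y_n^m`. -/
def Ynm (n : ℕ) (m : ℤ) : SphereFun := fun θ φ =>
  if m = 0 then
    Real.sqrt ((2*(n:ℝ)+1)/(4*Real.pi)) * legP n (Real.cos θ)
  else if 0 < m then
    (-1 : ℝ)^(m.natAbs) * Real.sqrt 2 *
      Real.sqrt ((2*(n:ℝ)+1)/(4*Real.pi) *
        ((Nat.factorial (n - m.natAbs) : ℝ) / (Nat.factorial (n + m.natAbs) : ℝ))) *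
      assocLegP n m.natAbs (Real.cos θ) * Real.cos ((m.natAbs : ℝ) * φ)
  else
    (-1 : ℝ)^(m.natAbs) * Real.sqrt 2 *
      Real.sqrt ((2*(n:ℝ)+1)/(4*Real.pi) *
        ((Nat.factorial (n - m.natAbs) : ℝ) / (Nat.factorial (n + m.natAbs) : ℝ))) *
      assocLegP n m.natAbs (Real.cos θ) * Real.sin ((m.natAbs : ℝ) * φ)

/-- The spherical-harmonic coefficient `u_n^m = ⟨u, Y_n^m⟩`. -/
def coeff (u : SphereFun) (n : ℕ) (m : ℤ) : ℝ := sInner u (Ynm n m)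

/-- `μ_n = n(n+1) + 1`. -/
def muSp (n : ℕ) : ℝ := (n:ℝ)*((n:ℝ)+1)+1

/-- Squared (inhomogeneous) Sobolev norm `‖u‖²_{H^k} = Σ μ_n^k |u_n^m|²`. -/
def sobNormSq (k : ℕ) (u : SphereFun) : ℝ≥0∞ :=
  ∑' p : ℕ × ℤ, if |p.2| ≤ (p.1 : ℤ) then
    ENNReal.ofReal ((muSp p.1)^k * (coeff u p.1 p.2)^2) else 0

/-- Squared homogeneous Sobolev norm `‖u‖²_{Ḣ^k} = Σ_{n ≥ 1} λ_n^k |u_n^m|²`. -/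
def dotNormSq (k : ℕ) (u : SphereFun) : ℝ≥0∞ :=
  ∑' p : ℕ × ℤ, if 1 ≤ p.1 ∧ |p.2| ≤ (p.1 : ℤ) then
    ENNReal.ofReal (((p.1:ℝ)*((p.1:ℝ)+1))^k * (coeff u p.1 p.2)^2) else 0

/-- Squared Gevrey norm `‖u‖²_{G_λ} = Σ_{n ≥ 1} μ_n² e^{2λ√μ_n} |u_n^m|²`. -/
def gevNormSq (lam : ℝ) (u : SphereFun) : ℝ≥0∞ :=
  ∑' p : ℕ × ℤ, if 1 ≤ p.1 ∧ |p.2| ≤ (p.1 : ℤ) then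
    ENNReal.ofReal ((muSp p.1)^2 * Real.exp (2*lam*Real.sqrt (muSp p.1)) *
      (coeff u p.1 p.2)^2) else 0

/-- `∂_θ`. -/
def dTheta (u : SphereFun) : SphereFun := fun θ φ => deriv (fun t => u t φ) θ

/-- `∂_φ`. -/
def dPhi (u : SphereFun) : SphereFun := fun θ φ => deriv (fun p => u θ p) φ

/-- The Laplace–Beltrami operator in colatitude-longitude coordinates:
`Δu = (1/sinθ)∂_θ(sinθ ∂_θu) + (1/sin²θ)∂²_φu`. -/
def lapS (u : SphereFun) : SphereFun := fun θ φ =>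
  (1 / Real.sin θ) * deriv (fun t => Real.sin t * dTheta u t φ) θ
  + (1 / (Real.sin θ)^2) * dPhi (dPhi u) θ φ

/-- A zonal function: one depending only on the colatitude `θ`. -/
def Zonal (u : SphereFun) : Prop := ∀ (θ φ₁ φ₂ : ℝ), u θ φ₁ = u θ φ₂

/-- Zonal on the coordinate chart `θ ∈ [0, π]`. -/
def ZonalOn (u : SphereFun) : Prop :=
  ∀ θ ∈ Set.Icc (0:ℝ) Real.pi, ∀ (φ₁ φ₂ : ℝ), u θ φ₁ = u θ φ₂

/-- `2π`-periodicity in the longitude. -/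
def PeriodicPhi (u : SphereFun) : Prop := ∀ θ φ, u θ (φ + 2*Real.pi) = u θ φ

/-- The advection term `U·∇f` for the velocity `U = ∇⊥Ψ`, i.e.
`(1/sinθ)∂_φΨ ∂_θf − ∂_θΨ (1/sinθ)∂_φf`. -/
def advect (Ψ f : SphereFun) : SphereFun := fun θ φ =>
  (1 / Real.sin θ) * dPhi Ψ θ φ * dTheta f θ φ
  - dTheta Ψ θ φ * ((1 / Real.sin θ) * dPhi f θ φ)

/-- Smoothness in the coordinates. -/
def SphSmooth (u : SphereFun) : Prop := ContDiff ℝ (⊤ : ℕ∞) (Function.uncurry u)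

/-- A function is trivial if it is a zonal function plus an element of
`span{Y₂^m : |m| ≤ 2}`; non-triviality is the negation of this. -/
def SphNontrivial (u : SphereFun) : Prop :=
  ¬ ∃ (z : SphereFun) (c : ℤ → ℝ), Zonal z ∧
      ∀ θ ∈ Set.Icc (0:ℝ) Real.pi, ∀ φ : ℝ,
        u θ φ = z θ φ + ∑ m ∈ Finset.Icc (-2 : ℤ) 2, c m * Ynm 2 m θ φ

/-- Real analyticity on the sphere, characterized by membership in a Gevrey class. -/
def RealAnalyticSphere (u : SphereFun) : Prop := ∃ lam > 0, gevNormSq lam u < ⊤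

/-- The inverse Laplace–Beltrami operator `Δ⁻¹` on mean-zero functions, defined
through the spherical harmonics expansion. -/
def invLap (u : SphereFun) : SphereFun := fun θ φ =>
  ∑' p : ℕ × ℤ, if 1 ≤ p.1 ∧ |p.2| ≤ (p.1 : ℤ) then
    (-(1:ℝ)/((p.1:ℝ)*((p.1:ℝ)+1))) * coeff u p.1 p.2 * Ynm p.1 p.2 θ φ else 0

/-- The linearization of the Euler equations on the `γ`-rotating sphere around
the Rossby–Haurwitz vorticity:
`Lω = (1/2)(3β√(5/π)cosθ + γ√(3/π))(1 + 6Δ⁻¹)∂_φω`. -/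
def Lop (β γ : ℝ) (ω : SphereFun) : SphereFun := fun θ φ =>
  (1/2) * (3*β*Real.sqrt (5/Real.pi) * Real.cos θ + γ*Real.sqrt (3/Real.pi)) *
    (dPhi ω θ φ + 6 * invLap (dPhi ω) θ φ)


section KerHelpers

open Polynomial

def pI (p : ℝ[X]) : ℝ := ∫ x in (-1:ℝ)..1, p.eval x

lemma pI_deriv (p : ℝ[X]) : pI (derivative p) = p.eval 1 - p.eval (-1) := by
  unfold pI
  apply intervalIntegral.integral_eq_sub_of_hasDerivAt (f := fun x => p.eval x)
  · intro x _; exact p.hasDerivAt x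
  · exact (Polynomial.continuous _).intervalIntegrable _ _

lemma pI_add (p q : ℝ[X]) : pI (p + q) = pI p + pI q := by
  unfold pI
  simp only [eval_add]
  exact intervalIntegral.integral_add ((Polynomial.continuous _).intervalIntegrable _ _)
    ((Polynomial.continuous _).intervalIntegrable _ _)

lemma pI_C_mul (a : ℝ) (p : ℝ[X]) : pI (C a * p) = a * pI p := by
  unfold pI
  simp only [eval_mul, eval_C]
  exact intervalIntegral.integral_const_mul _ _

lemma pI_zero : pI 0 = 0 := by simp [pI]

lemma pI_parts (p q : ℝ[X]) (h1 : (p * q).eval 1 = 0) (h2 : (p * q).eval (-1) = 0) :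
    pI (derivative p * q) = - pI (p * derivative q) := by
  have := pI_deriv (p * q)
  rw [derivative_mul, pI_add, h1, h2] at this
  linarith

/-- w_n -/
def pw (n : ℕ) : ℝ[X] := (X ^ 2 - 1) ^ n

lemma pw_bdry (n k : ℕ) (hk : k < n) (x : ℝ) (hx : x ^ 2 = 1) :
    (derivative^[k] (pw n)).eval x = 0 := by
  have h := pow_sub_dvd_iterate_derivative_pow (X ^ 2 - 1 : ℝ[X]) n k
  obtain ⟨c, hc⟩ := h
  unfold pw
  rw [hc, eval_mul, eval_pow]
  simp [hx, Nat.sub_ne_zero_of_lt hk]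

lemma pw_parts (n k : ℕ) (hk : k ≤ n) (q : ℝ[X]) :
    pI (derivative^[k] (pw n) * q) = (-1) ^ k * pI (pw n * derivative^[k] q) := by
  induction k generalizing q with
  | zero => simp
  | succ k ih =>
    rw [Function.iterate_succ_apply', pI_parts, ih (by omega), Function.iterate_succ_apply]
    · ring
    · rw [eval_mul, pw_bdry n k (by omega) 1 (by norm_num), zero_mul]
    · rw [eval_mul, pw_bdry n k (by omega) (-1) (by norm_num), zero_mul]

lemma pw_natDegree (n : ℕ) : (pw n).natDegree = 2 * n := by
  unfold pw
  rw [natDegree_pow]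
  have : (X ^ 2 - 1 : ℝ[X]).natDegree = 2 := by
    have := natDegree_X_pow_sub_C (R := ℝ) (n := 2) (r := 1)
    simpa using this
  rw [this]; ring

lemma pw_monic (n : ℕ) : (pw n).Monic := by
  unfold pw
  apply Monic.pow
  have := monic_X_pow_sub_C (R := ℝ) 1 (n := 2) (by norm_num)
  simpa using this

lemma pw_top (n : ℕ) : derivative^[2 * n] (pw n) = C ((2 * n).factorial : ℝ) := by
  have hd : (derivative^[2*n] (pw n)).natDegree ≤ 0 := by
    have := natDegree_iterate_derivative (pw n) (2 * n)
    rw [pw_natDegree] at this; omega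
  rw [eq_C_of_natDegree_le_zero hd, coeff_iterate_derivative]
  congr 1
  have h1 : (pw n).coeff (2 * n) = 1 := by
    have := pw_monic n
    rw [Monic, leadingCoeff, pw_natDegree] at this; exact this
  simp [h1, Nat.descFactorial_self]

lemma pI_pw_rec (n : ℕ) : (2 * n + 3) * pI (pw (n+1)) = - ((2 * n + 2) * pI (pw n)) := by
  have h := pI_deriv (X * pw (n+1))
  have e : derivative (X * pw (n+1)) = C (2 * n + 3 : ℝ) * pw (n+1) + C (2 * n + 2 : ℝ) * pw n := by
    unfold pw
    have hC : (C (2:ℝ)) = (2 : ℝ[X]) := rfl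
    have hC3 : (C (3:ℝ)) = (3 : ℝ[X]) := rfl
    simp only [derivative_mul, derivative_X, derivative_pow_succ, derivative_sub, derivative_one,
      map_add, map_mul]
    simp [hC, hC3]
    ring
  rw [e, pI_add, pI_C_mul, pI_C_mul] at h
  simp [pw] at h
  unfold pw
  linarith

lemma pI_pw (n : ℕ) : (-1) ^ n * pI (pw n) * ((2 * n + 1).factorial : ℝ)
    = 2 * 4 ^ n * (n.factorial : ℝ) ^ 2 := by
  induction n with
  | zero => simp [pw, pI]; norm_num
  | succ n ih =>
    have h := pI_pw_rec n
    have e : ((2 * (n + 1) + 1).factorial : ℝ)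
        = (2 * n + 3) * (2 * n + 2) * ((2 * n + 1).factorial : ℝ) := by
      rw [show 2 * (n + 1) + 1 = (2 * n + 1) + 1 + 1 by ring, Nat.factorial_succ,
        Nat.factorial_succ]
      push_cast; ring
    have e2 : ((n + 1).factorial : ℝ) = (n + 1) * n.factorial := by
      rw [Nat.factorial_succ]; push_cast; ring
    rw [e, e2, pow_succ]
    linear_combination (-(-1) ^ n * (2 * n + 2) * ((2 * n + 1).factorial : ℝ)) * h
      + (2 * n + 2) ^ 2 * ih

/-- Legendre polynomial -/
def pL (n : ℕ) : ℝ[X] := C (1 / ((2:ℝ)^n * (Nat.factorial n : ℝ))) * derivative^[n] (pw n)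

lemma iteratedDeriv_poly (p : ℝ[X]) (k : ℕ) :
    iteratedDeriv k (fun x => p.eval x) = fun x => (derivative^[k] p).eval x := by
  induction k generalizing p with
  | zero => simp
  | succ k ih =>
    rw [iteratedDeriv_succ']
    have : deriv (fun x => p.eval x) = fun x => (derivative p).eval x := by
      ext x; exact p.deriv
    rw [this, ih, Function.iterate_succ_apply]

lemma legP_eq (n : ℕ) : legP n = fun x => (pL n).eval x := by
  ext s
  have h : (fun x : ℝ => (x^2 - 1)^n) = fun x => (pw n).eval x := by
    ext x; simp [pw]
  simp only [legP, pL, eval_mul, eval_C]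
  rw [h, iteratedDeriv_poly]

lemma pL_iter (n k : ℕ) : derivative^[k] (pL n) =
    C (1 / ((2:ℝ)^n * (Nat.factorial n : ℝ))) * derivative^[n + k] (pw n) := by
  rw [pL, iterate_derivative_C_mul, ← Function.iterate_add_apply, add_comm]

lemma pw_ode (n k : ℕ) : (X ^ 2 - 1) * derivative^[k+2] (pw n)
    + C (2 * (k + 1 - n) : ℝ) * X * derivative^[k+1] (pw n)
    + C ((k + 1) * (k - 2 * n) : ℝ) * derivative^[k] (pw n) = 0 := by
  induction k with
  | zero =>
    have h0 : (X ^ 2 - 1) * derivative (pw n) = C (2 * n : ℝ) * X * pw n := by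
      unfold pw
      rcases n with _ | n
      · simp
      · simp only [derivative_pow, derivative_sub, derivative_one]
        simp [pow_succ]
        ring
    have := congrArg derivative h0
    simp only [derivative_mul, derivative_sub, derivative_X_pow, derivative_one, derivative_C,
      derivative_X] at this
    simp only [Function.iterate_succ_apply', Function.iterate_zero_apply, zero_add]
    have hC : (C (2:ℝ)) = (2 : ℝ[X]) := rfl
    simp [hC] at this ⊢
    linear_combination this
  | succ k ih =>
    have := congrArg derivative ih
    simp only [derivative_add, derivative_mul, derivative_sub, derivative_X_pow, derivative_one,
      derivative_C, derivative_X, derivative_zero, ← Function.iterate_succ_apply'] at this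
    simp only [Nat.succ_eq_add_one] at this
    rw [show k + 1 + 2 = k + 2 + 1 by ring]
    rw [show k + 1 + 1 = k + 2 by ring] at *
    have hC : (C (2:ℝ)) = (2 : ℝ[X]) := rfl
    simp [hC] at this ⊢
    linear_combination this

lemma pL_ode (n m : ℕ) : derivative ((1 - X ^ 2) ^ (m + 1) * derivative^[m+1] (pL n)) =
    - (C (((n:ℝ) - m) * (n + m + 1)) * ((1 - X ^ 2) ^ m * derivative^[m] (pL n))) := by
  have h := pw_ode n (n + m)
  rw [derivative_mul, ← Function.iterate_succ_apply' derivative, pL_iter, pL_iter, pL_iter]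
  simp only [Nat.succ_eq_add_one]
  rw [show n + (m + 1 + 1) = n + m + 2 by ring, show n + (m + 1) = n + m + 1 by ring]
  simp only [derivative_pow, derivative_sub, derivative_one]
  have hC : (C (2:ℝ)) = (2 : ℝ[X]) := rfl
  simp [hC] at h ⊢
  generalize derivative^[n + m + 2] (pw n) = a at *
  generalize derivative^[n + m + 1] (pw n) = b at *
  generalize derivative^[n + m] (pw n) = c at *
  generalize (C (((n.factorial : ℝ))⁻¹) * C (((2:ℝ) ^ n)⁻¹)) = d at *
  linear_combination (-d * (1 - X ^ 2) ^ m) * h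

/-- A_m(n,n') -/
def pA (m n n' : ℕ) : ℝ := pI ((1 - X ^ 2) ^ m * derivative^[m] (pL n) * derivative^[m] (pL n'))

lemma pA_symm (m n n' : ℕ) : pA m n n' = pA m n' n := by
  unfold pA; congr 1; ring

lemma pA_succ (m n n' : ℕ) : pA (m+1) n n' = (((n:ℝ) - m) * (n + m + 1)) * pA m n n' := by
  have h := pI_parts ((1 - X ^ 2) ^ (m + 1) * derivative^[m+1] (pL n)) (derivative^[m] (pL n'))
    (by simp) (by simp)
  rw [pL_ode, ← Function.iterate_succ_apply' derivative] at h
  unfold pA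
  have e : -(C (((n:ℝ) - m) * (n + m + 1)) * ((1 - X ^ 2) ^ m * derivative^[m] (pL n)))
      * derivative^[m] (pL n') = C (-(((n:ℝ) - m) * (n + m + 1))) *
      ((1 - X ^ 2) ^ m * derivative^[m] (pL n) * derivative^[m] (pL n')) := by
    rw [C_neg]; ring
  rw [e, pI_C_mul] at h
  linarith

lemma pA_eq (m n n' : ℕ) (hm : m ≤ n) :
    pA m n n' * ((n - m).factorial : ℝ) = ((n + m).factorial : ℝ) * pA 0 n n' := by
  induction m with
  | zero => simp; ring
  | succ m ih =>
    have ih := ih (by omega)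
    rw [pA_succ]
    have e : ((n - m).factorial : ℝ) = ((n:ℝ) - m) * ((n - (m+1)).factorial : ℝ) := by
      rw [show n - m = (n - (m+1)) + 1 by omega, Nat.factorial_succ]
      push_cast [Nat.cast_sub (show m + 1 ≤ n by omega)]
      ring
    have e2 : ((n + (m + 1)).factorial : ℝ) = (n + m + 1) * ((n + m).factorial : ℝ) := by
      rw [← add_assoc, Nat.factorial_succ]; push_cast; ring
    rw [e2]; rw [e] at ih
    linear_combination (n + m + 1 : ℝ) * ih

lemma pA_zero_ne (n n' : ℕ) (h : n ≠ n') : pA 0 n n' = 0 := by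
  have h1 := pA_succ 0 n n'
  have h2 := pA_succ 0 n' n
  rw [pA_symm, h2, pA_symm] at h1
  have h3 : ((n':ℝ) - n) * (n' + n + 1) * pA 0 n n' = 0 := by
    push_cast at h1
    linear_combination h1
  have h4 : (n':ℝ) - n ≠ 0 := sub_ne_zero.mpr (by exact_mod_cast h.symm)
  have h5 : (n':ℝ) + n + 1 ≠ 0 := by positivity
  simpa [h4, h5] using h3

lemma pA_zero_self (n : ℕ) : pA 0 n n = 2 / (2 * n + 1) := by
  unfold pA
  have h := pw_parts n n le_rfl (derivative^[n] (pw n))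
  rw [← Function.iterate_add_apply, ← two_mul, pw_top, mul_comm (pw n), pI_C_mul] at h
  have e : (1 - X ^ 2) ^ 0 * derivative^[0] (pL n) * derivative^[0] (pL n) =
    C ((1 / ((2:ℝ)^n * (Nat.factorial n : ℝ))) ^ 2) *
      (derivative^[n] (pw n) * derivative^[n] (pw n)) := by
    simp only [pL, Function.iterate_zero_apply, pow_zero, C_pow]; ring
  rw [e, pI_C_mul, h]
  have h2 := pI_pw n
  rw [Nat.factorial_succ] at h2
  push_cast at h2
  have e4 : (4:ℝ) ^ n = (2 ^ n) ^ 2 := by rw [← pow_mul, mul_comm, pow_mul]; norm_num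
  rw [e4] at h2
  have hf : (n.factorial : ℝ) ≠ 0 := by positivity
  have hp : (2:ℝ) ^ n ≠ 0 := by positivity
  field_simp
  linear_combination h2

lemma pL_iter_degree (m i : ℕ) : (derivative^[m] (pL (m + i))).degree = i := by
  rw [pL_iter, degree_C_mul (by positivity)]
  apply degree_eq_of_le_of_coeff_ne_zero
  · apply natDegree_le_iff_degree_le.mp
    have := natDegree_iterate_derivative (pw (m+i)) (m + i + m)
    rw [pw_natDegree] at this; omega
  · rw [coeff_iterate_derivative]
    have h1 : (pw (m+i)).coeff (i + (m + i + m)) = 1 := by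
      have := pw_monic (m+i)
      rw [Monic, leadingCoeff, pw_natDegree] at this
      rw [← this]; congr 1; ring
    rw [h1]
    simp [Nat.descFactorial_eq_zero_iff_lt]

lemma pL_span (m : ℕ) : Submodule.span ℝ (Set.range fun i => derivative^[m] (pL (m + i))) = ⊤ := by
  let S : Polynomial.Sequence ℝ := ⟨fun i => derivative^[m] (pL (m + i)), pL_iter_degree m⟩
  exact S.span (fun i => isUnit_iff_ne_zero.mpr (leadingCoeff_ne_zero.mpr (S.ne_zero i)))

def yK (n : ℕ) (m : ℤ) : ℝ :=
  if m = 0 then Real.sqrt ((2*(n:ℝ)+1)/(4*Real.pi)) else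
    Real.sqrt 2 * Real.sqrt ((2*(n:ℝ)+1)/(4*Real.pi) *
        ((Nat.factorial (n - m.natAbs) : ℝ) / (Nat.factorial (n + m.natAbs) : ℝ)))

def yA (n : ℕ) (m : ℤ) (θ : ℝ) : ℝ :=
  yK n m * (Real.sin θ ^ m.natAbs * (derivative^[m.natAbs] (pL n)).eval (Real.cos θ))

def yT (m : ℤ) (φ : ℝ) : ℝ := if 0 ≤ m then Real.cos ((m:ℝ) * φ) else Real.sin (-(m:ℝ) * φ)

lemma yA_cont (n : ℕ) (m : ℤ) : Continuous (yA n m) := by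
  unfold yA
  have := (derivative^[m.natAbs] (pL n)).continuous
  fun_prop

lemma yT_cont (m : ℤ) : Continuous (yT m) := by
  unfold yT
  split_ifs <;> fun_prop

lemma yK_neg (n : ℕ) (m : ℤ) : yK n (-m) = yK n m := by simp [yK]

lemma yA_neg (n : ℕ) (m : ℤ) : yA n (-m) = yA n m := by
  ext θ; simp [yA, yK_neg]

lemma yK_pos (n : ℕ) (m : ℤ) : 0 < yK n m := by
  unfold yK
  have := Real.pi_pos
  split_ifs <;> positivity

lemma rpow_sin (θ : ℝ) (h : θ ∈ Set.Icc (0:ℝ) Real.pi) (k : ℕ) :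
    (1 - Real.cos θ ^ 2) ^ ((k:ℝ)/2) = Real.sin θ ^ k := by
  have hs := Real.sin_nonneg_of_mem_Icc h
  have : 1 - Real.cos θ ^ 2 = Real.sin θ ^ (2:ℝ) := by
    have := Real.sin_sq_add_cos_sq θ
    rw [Real.rpow_two]; linarith
  rw [this, ← Real.rpow_mul hs, ← Real.rpow_natCast]
  congr 1; ring

lemma Ynm_eq (n : ℕ) (m : ℤ) (θ : ℝ) (h : θ ∈ Set.Icc (0:ℝ) Real.pi) (φ : ℝ) :
    Ynm n m θ φ = yA n m θ * yT m φ := by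
  have h1 : ((-1:ℝ) ^ m.natAbs) * (-1:ℝ) ^ m.natAbs = 1 := by
    rw [← mul_pow]; norm_num
  unfold Ynm assocLegP yA yK yT
  rw [rpow_sin θ h, legP_eq, iteratedDeriv_poly]
  rcases lt_trichotomy m 0 with hm | hm | hm
  · have e : (m.natAbs : ℝ) = -(m:ℝ) := by
      rw [Nat.cast_natAbs, abs_of_neg hm]; push_cast; ring
    rw [if_neg hm.ne, if_neg (by omega), if_neg hm.ne, if_neg (by omega), e]
    linear_combination (Real.sqrt 2 * Real.sqrt ((2*(n:ℝ)+1)/(4*Real.pi) *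
        ((Nat.factorial (n - m.natAbs) : ℝ) / (Nat.factorial (n + m.natAbs) : ℝ))) *
        (Real.sin θ ^ m.natAbs * (derivative^[m.natAbs] (pL n)).eval (Real.cos θ)) *
        Real.sin (-(m:ℝ) * φ)) * h1
  · subst hm; simp
  · have e : (m.natAbs : ℝ) = (m:ℝ) := by
      rw [Nat.cast_natAbs, abs_of_pos hm]
    rw [if_neg hm.ne', if_pos hm, if_neg hm.ne', if_pos hm.le, e]
    linear_combination (Real.sqrt 2 * Real.sqrt ((2*(n:ℝ)+1)/(4*Real.pi) *
        ((Nat.factorial (n - m.natAbs) : ℝ) / (Nat.factorial (n + m.natAbs) : ℝ))) *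
        (Real.sin θ ^ m.natAbs * (derivative^[m.natAbs] (pL n)).eval (Real.cos θ)) *
        Real.cos ((m:ℝ) * φ)) * h1

lemma yT_deriv (m : ℤ) (φ : ℝ) : HasDerivAt (yT m) (-(m:ℝ) * yT (-m) φ) φ := by
  rcases lt_trichotomy m 0 with hm | hm | hm
  · have e : yT m = fun φ => Real.sin (-(m:ℝ) * φ) := by
      ext x; simp [yT, not_le.mpr hm]
    rw [e]
    have h := ((hasDerivAt_id φ).const_mul (-(m:ℝ))).sin
    refine h.congr_deriv ?_
    simp [yT, hm.le]; ring
  · subst hm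
    have e : yT 0 = fun φ => (1:ℝ) := by ext x; simp [yT]
    rw [e]; simpa using hasDerivAt_const φ (1:ℝ)
  · have e : yT m = fun φ => Real.cos ((m:ℝ) * φ) := by
      ext x; simp [yT, hm.le]
    rw [e]
    have h := ((hasDerivAt_id φ).const_mul ((m:ℝ))).cos
    refine h.congr_deriv ?_
    simp [yT, not_le.mpr hm]; ring

lemma yT_per (m : ℤ) (φ : ℝ) : yT m (φ + 2 * Real.pi) = yT m φ := by
  unfold yT
  split_ifs
  · rw [mul_add, Real.cos_add_int_mul_two_pi]
  · have := Real.sin_add_int_mul_two_pi (-(m:ℝ) * φ) (-m)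
    rw [← this]; push_cast; congr 1; ring

lemma int_cos (k : ℤ) : ∫ φ in (0:ℝ)..(2*Real.pi), Real.cos ((k:ℝ) * φ)
    = if k = 0 then 2 * Real.pi else 0 := by
  split_ifs with h
  · subst h; simp
  · have hk : (k:ℝ) ≠ 0 := by exact_mod_cast h
    rw [intervalIntegral.integral_comp_mul_left _ hk, integral_cos]
    have : Real.sin ((k:ℝ) * (2 * Real.pi)) = 0 := by
      have := Real.sin_int_mul_pi (2 * k)
      rw [← this]; push_cast; congr 1; ring
    simp [this]

lemma int_sin (k : ℤ) : ∫ φ in (0:ℝ)..(2*Real.pi), Real.sin ((k:ℝ) * φ) = 0 := by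
  by_cases h : k = 0
  · subst h; simp
  · have hk : (k:ℝ) ≠ 0 := by exact_mod_cast h
    rw [intervalIntegral.integral_comp_mul_left _ hk, integral_sin]
    simp

lemma yT_orth (m m' : ℤ) : ∫ φ in (0:ℝ)..(2*Real.pi), yT m φ * yT m' φ =
    if m = m' then (if m = 0 then 2 * Real.pi else Real.pi) else 0 := by
  have key : ∀ (a b c d : ℝ) (k l : ℤ),
      ∫ φ in (0:ℝ)..(2*Real.pi), (a * Real.cos ((k:ℝ) * φ) + b * Real.cos ((l:ℝ) * φ) +
        (c * Real.sin ((k:ℝ) * φ) + d * Real.sin ((l:ℝ) * φ))) =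
      a * (if k = 0 then 2 * Real.pi else 0) + b * (if l = 0 then 2 * Real.pi else 0) := by
    intro a b c d k l
    have i1 : IntervalIntegrable (fun φ => a * Real.cos ((k:ℝ) * φ)) volume 0 (2*Real.pi) :=
      Continuous.intervalIntegrable (by fun_prop) _ _
    have i2 : IntervalIntegrable (fun φ => b * Real.cos ((l:ℝ) * φ)) volume 0 (2*Real.pi) :=
      Continuous.intervalIntegrable (by fun_prop) _ _
    have i3 : IntervalIntegrable (fun φ => c * Real.sin ((k:ℝ) * φ)) volume 0 (2*Real.pi) :=
      Continuous.intervalIntegrable (by fun_prop) _ _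
    have i4 : IntervalIntegrable (fun φ => d * Real.sin ((l:ℝ) * φ)) volume 0 (2*Real.pi) :=
      Continuous.intervalIntegrable (by fun_prop) _ _
    rw [intervalIntegral.integral_add (i1.add i2) (i3.add i4), intervalIntegral.integral_add i1 i2,
      intervalIntegral.integral_add i3 i4]
    simp only [intervalIntegral.integral_const_mul, int_cos, int_sin]; ring
  by_cases h1 : 0 ≤ m <;> by_cases h2 : 0 ≤ m'
  · have e : ∀ φ, yT m φ * yT m' φ = ((1/2) * Real.cos (((m - m' : ℤ):ℝ) * φ)
        + (1/2) * Real.cos (((m + m' : ℤ):ℝ) * φ) + (0 * Real.sin (((m - m' : ℤ):ℝ) * φ) +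
         0 * Real.sin (((m + m' : ℤ):ℝ) * φ))) := by
      intro φ
      simp only [yT, if_pos h1, if_pos h2]
      push_cast
      rw [sub_mul, add_mul, Real.cos_sub, Real.cos_add]; ring
    simp only [e]; rw [key]
    split_ifs <;> first | omega | ring
  · have e : ∀ φ, yT m φ * yT m' φ = (0 * Real.cos (((m - m' : ℤ):ℝ) * φ)
        + 0 * Real.cos (((m + m' : ℤ):ℝ) * φ) + ((1/2) * Real.sin (((m - m' : ℤ):ℝ) * φ) +
         (-1/2) * Real.sin (((m + m' : ℤ):ℝ) * φ))) := by
      intro φ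
      simp only [yT, if_pos h1, if_neg h2]
      push_cast
      rw [sub_mul, add_mul, Real.sin_sub, Real.sin_add, neg_mul, Real.sin_neg]; ring
    simp only [e]; rw [key]
    split_ifs <;> first | omega | ring
  · have e : ∀ φ, yT m φ * yT m' φ = (0 * Real.cos (((m - m' : ℤ):ℝ) * φ)
        + 0 * Real.cos (((m + m' : ℤ):ℝ) * φ) + ((-1/2) * Real.sin (((m - m' : ℤ):ℝ) * φ) +
         (-1/2) * Real.sin (((m + m' : ℤ):ℝ) * φ))) := by
      intro φ
      simp only [yT, if_neg h1, if_pos h2]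
      push_cast
      rw [sub_mul, add_mul, Real.sin_sub, Real.sin_add, neg_mul, Real.sin_neg]; ring
    simp only [e]; rw [key]
    split_ifs <;> first | omega | ring
  · have e : ∀ φ, yT m φ * yT m' φ = ((1/2) * Real.cos (((m - m' : ℤ):ℝ) * φ)
        + (-1/2) * Real.cos (((m + m' : ℤ):ℝ) * φ) + (0 * Real.sin (((m - m' : ℤ):ℝ) * φ) +
         0 * Real.sin (((m + m' : ℤ):ℝ) * φ))) := by
      intro φ
      simp only [yT, if_neg h1, if_neg h2]
      push_cast
      rw [sub_mul, add_mul, Real.cos_sub, Real.cos_add, neg_mul, neg_mul, Real.sin_neg,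
        Real.sin_neg]; ring
    simp only [e]; rw [key]
    split_ifs <;> first | omega | ring

lemma int_cos_sub (p : ℝ[X]) :
    ∫ θ in (0:ℝ)..Real.pi, p.eval (Real.cos θ) * Real.sin θ = pI p := by
  have h := intervalIntegral.integral_comp_mul_deriv (a := 0) (b := Real.pi)
    (f := Real.cos) (f' := fun x => - Real.sin x) (g := fun x => p.eval x)
    (fun x _ => Real.hasDerivAt_cos x) (by fun_prop) p.continuous
  simp only [Real.cos_zero, Real.cos_pi, Function.comp] at h
  rw [intervalIntegral.integral_symm (-1 : ℝ) 1] at h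
  simp only [mul_neg, intervalIntegral.integral_neg] at h
  unfold pI
  linarith

lemma yA_orth (n n' : ℕ) (m : ℤ) (h : m.natAbs ≤ n) :
    ∫ θ in (0:ℝ)..Real.pi, yA n m θ * yA n' m θ * Real.sin θ =
    if n = n' then (if m = 0 then 1 / (2 * Real.pi) else 1 / Real.pi) else 0 := by
  have e : ∀ θ, yA n m θ * yA n' m θ * Real.sin θ = (yK n m * yK n' m) *
      (((1 - X ^ 2) ^ m.natAbs * derivative^[m.natAbs] (pL n) *
        derivative^[m.natAbs] (pL n')).eval (Real.cos θ) * Real.sin θ) := by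
    intro θ
    simp only [eval_mul, eval_pow, eval_sub, eval_one, eval_X]
    rw [← Real.sin_sq, yA, yA, ← pow_mul, mul_comm 2, pow_mul]
    ring
  simp only [e]
  rw [intervalIntegral.integral_const_mul, int_cos_sub]
  change _ * pA _ _ _ = _
  have h1 := pA_eq m.natAbs n n' h
  have hf : ((n - m.natAbs).factorial : ℝ) ≠ 0 := by positivity
  have hf' : ((n + m.natAbs).factorial : ℝ) ≠ 0 := by positivity
  have hpi := Real.pi_pos
  split_ifs with hn hm
  · subst hn hm
    simp only [Int.natAbs_zero]
    rw [pA_zero_self, yK, if_pos rfl, Real.mul_self_sqrt (by positivity)]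
    field_simp; norm_num
  · subst hn
    rw [pA_zero_self] at h1
    have h2 : pA m.natAbs n n = ((n + m.natAbs).factorial : ℝ) * (2 / (2 * n + 1))
      / ((n - m.natAbs).factorial : ℝ) := by
      rw [eq_div_iff hf, h1]
    rw [h2, yK, if_neg hm, mul_mul_mul_comm, Real.mul_self_sqrt (by positivity),
      Real.mul_self_sqrt (by positivity)]
    field_simp; norm_num
  · rw [pA_zero_ne n n' hn, mul_zero] at h1
    have h2 : pA m.natAbs n n' = 0 := by simpa [hf] using h1
    rw [h2, mul_zero]

lemma sInner_congr {u u' v v' : SphereFun}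
    (hu : ∀ θ ∈ Set.Icc (0:ℝ) Real.pi, ∀ φ, u θ φ = u' θ φ)
    (hv : ∀ θ ∈ Set.Icc (0:ℝ) Real.pi, ∀ φ, v θ φ = v' θ φ) : sInner u v = sInner u' v' := by
  unfold sInner
  congr 1; ext φ
  apply intervalIntegral.integral_congr
  intro θ hθ
  rw [Set.uIcc_of_le Real.pi_pos.le] at hθ
  simp only [hu θ hθ φ, hv θ hθ φ]

def yY (n : ℕ) (m : ℤ) : SphereFun := fun θ φ => yA n m θ * yT m φ

lemma yY_cont (n : ℕ) (m : ℤ) : Continuous (Function.uncurry (yY n m)) := by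
  have h1 := yA_cont n m
  have h2 := yT_cont m
  change Continuous (fun p : ℝ × ℝ => yA n m p.1 * yT m p.2)
  fun_prop

lemma coeff_eq (u : SphereFun) (n : ℕ) (m : ℤ) : coeff u n m = sInner u (yY n m) :=
  sInner_congr (fun _ _ _ => rfl) (fun θ hθ φ => Ynm_eq n m θ hθ φ)

lemma yY_orth (n n' : ℕ) (m m' : ℤ) (h : m.natAbs ≤ n) :
    sInner (yY n m) (yY n' m') = if n = n' ∧ m = m' then 1 else 0 := by
  unfold sInner yY
  have e : ∀ θ φ, yA n m θ * yT m φ * (yA n' m' θ * yT m' φ) * Real.sin θ =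
    (yT m φ * yT m' φ) * (yA n m θ * yA n' m' θ * Real.sin θ) := by intros; ring
  simp only [e, intervalIntegral.integral_const_mul, intervalIntegral.integral_mul_const]
  rw [yT_orth]
  have hpi := Real.pi_pos.ne'
  by_cases hm : m = m'
  · subst hm
    rw [yA_orth n n' m h]
    by_cases hn : n = n'
    · by_cases h0 : m = 0 <;> simp [hn, h0, hpi]
      field_simp
    · simp [hn]
  · simp [hm]

def sM : Measure (ℝ × ℝ) := (volume.restrict (Set.Ioc 0 (2*Real.pi))).prod
  (volume.restrict (Set.Ioc 0 Real.pi))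

lemma sM_integrable {F : ℝ × ℝ → ℝ} (hF : Continuous F) : Integrable F sM := by
  unfold sM
  rw [Measure.prod_restrict, ← Measure.volume_eq_prod]
  have : IntegrableOn F (Set.Icc 0 (2*Real.pi) ×ˢ Set.Icc 0 Real.pi) volume :=
    hF.continuousOn.integrableOn_compact (isCompact_Icc.prod isCompact_Icc)
  exact this.mono_set (Set.prod_mono Set.Ioc_subset_Icc_self Set.Ioc_subset_Icc_self)

lemma sM_integral {F : ℝ × ℝ → ℝ} (hF : Continuous F) :
    ∫ φ in (0:ℝ)..(2*Real.pi), ∫ θ in (0:ℝ)..Real.pi, F (φ, θ) = ∫ q, F q ∂sM := by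
  have hpi := Real.pi_pos
  have h := integral_prod F (sM_integrable hF)
  rw [show sM = (volume.restrict (Set.Ioc 0 (2*Real.pi))).prod
    (volume.restrict (Set.Ioc 0 Real.pi)) from rfl, h,
    intervalIntegral.integral_of_le (by positivity)]
  simp only [intervalIntegral.integral_of_le hpi.le]

lemma sInner_eq {u v : SphereFun} (hu : Continuous (Function.uncurry u))
    (hv : Continuous (Function.uncurry v)) :
    sInner u v = ∫ q, u q.2 q.1 * v q.2 q.1 * Real.sin q.2 ∂sM := by
  unfold sInner
  have hc : Continuous (fun q : ℝ × ℝ => u q.2 q.1 * v q.2 q.1 * Real.sin q.2) := by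
    have h1 : Continuous (fun q : ℝ × ℝ => u q.2 q.1) := hu.comp continuous_swap
    have h2 : Continuous (fun q : ℝ × ℝ => v q.2 q.1) := hv.comp continuous_swap
    fun_prop
  rw [← sM_integral hc]

lemma sInner_swap {u v : SphereFun} (hu : Continuous (Function.uncurry u))
    (hv : Continuous (Function.uncurry v)) :
    sInner u v = ∫ θ in (0:ℝ)..Real.pi, ∫ φ in (0:ℝ)..(2*Real.pi),
      u θ φ * v θ φ * Real.sin θ := by
  unfold sInner
  have hc : Continuous (fun q : ℝ × ℝ => u q.2 q.1 * v q.2 q.1 * Real.sin q.2) := by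
    have h1 : Continuous (fun q : ℝ × ℝ => u q.2 q.1) := hu.comp continuous_swap
    have h2 : Continuous (fun q : ℝ × ℝ => v q.2 q.1) := hv.comp continuous_swap
    fun_prop
  apply intervalIntegral_intervalIntegral_swap
  have : IntegrableOn (fun q : ℝ × ℝ => u q.2 q.1 * v q.2 q.1 * Real.sin q.2)
      (Set.uIcc 0 (2*Real.pi) ×ˢ Set.uIcc 0 Real.pi) volume :=
    hc.continuousOn.integrableOn_compact (isCompact_uIcc.prod isCompact_uIcc)
  exact this.mono_set (Set.prod_mono Set.uIoc_subset_uIcc Set.uIoc_subset_uIcc)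

lemma dPhi_hasDeriv {ω : SphereFun} (h : SphSmooth ω) (θ φ : ℝ) :
    HasDerivAt (fun p => ω θ p) (dPhi ω θ φ) φ := by
  have : DifferentiableAt ℝ (fun p => ω θ p) φ := by
    have h1 : Differentiable ℝ (Function.uncurry ω) := h.differentiable (by simp)
    have h2 : Differentiable ℝ (fun p => Function.uncurry ω (θ, p)) :=
      h1.comp (by fun_prop)
    exact h2 φ
  exact this.hasDerivAt

lemma dPhi_cont {ω : SphereFun} (h : SphSmooth ω) : Continuous (Function.uncurry (dPhi ω)) := by
  have h1 : Differentiable ℝ (Function.uncurry ω) := h.differentiable (by simp)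
  have e : Function.uncurry (dPhi ω) = fun p => fderiv ℝ (Function.uncurry ω) p (0, 1) := by
    ext ⟨θ, φ⟩
    have h2 : HasDerivAt (fun p => (θ, p)) ((0:ℝ), (1:ℝ)) φ :=
      (hasDerivAt_const φ θ).prodMk (hasDerivAt_id φ)
    have h3 := (h1 (θ, φ)).hasFDerivAt.comp_hasDerivAt φ h2
    exact h3.deriv
  rw [e]
  exact (h.continuous_fderiv (by simp)).clm_apply continuous_const

lemma dPhi_per {ω : SphereFun} (h : PeriodicPhi ω) : PeriodicPhi (dPhi ω) := by
  intro θ φ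
  unfold dPhi
  rw [← deriv_comp_add_const]
  congr 1; ext p; exact h θ p

lemma coeff_dPhi {ω : SphereFun} (h : SphSmooth ω) (hp : PeriodicPhi ω) (n : ℕ) (m : ℤ) :
    coeff (dPhi ω) n m = m * coeff ω n (-m) := by
  have hω : Continuous (Function.uncurry ω) := h.continuous
  rw [coeff_eq, coeff_eq, sInner_swap (dPhi_cont h) (yY_cont n m),
    sInner_swap hω (yY_cont n (-m)), ← intervalIntegral.integral_const_mul]
  congr 1; ext θ
  have hd : Continuous (fun φ => dPhi ω θ φ) := (dPhi_cont h).comp (by fun_prop : Continuous fun φ => (θ, φ))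
  have hc : Continuous (fun φ => ω θ φ) := hω.comp (by fun_prop : Continuous fun φ => (θ, φ))
  have key := intervalIntegral.integral_deriv_mul_eq_sub_of_hasDerivAt (a := 0) (b := 2 * Real.pi)
    (u := fun φ => ω θ φ) (v := yT m) (u' := fun φ => dPhi ω θ φ)
    (v' := fun φ => -(m:ℝ) * yT (-m) φ) hc.continuousOn (yT_cont m).continuousOn
    (fun x _ => dPhi_hasDeriv h θ x) (fun x _ => yT_deriv m x) (hd.intervalIntegrable _ _)
    (((yT_cont (-m)).const_mul _).intervalIntegrable _ _)
  have e1 := hp θ 0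
  have e2 := yT_per m 0
  rw [zero_add] at e1 e2
  have hm := yT_cont m
  have hm' := yT_cont (-m)
  have i1 : IntervalIntegrable (fun φ => dPhi ω θ φ * yT m φ) volume 0 (2 * Real.pi) :=
    Continuous.intervalIntegrable (by fun_prop) _ _
  have i2 : IntervalIntegrable (fun φ => ω θ φ * (-(m:ℝ) * yT (-m) φ)) volume 0 (2 * Real.pi) :=
    Continuous.intervalIntegrable (by fun_prop) _ _
  rw [e1, e2, sub_self, intervalIntegral.integral_add i1 i2] at key
  have e3 : ∀ φ, dPhi ω θ φ * yY n m θ φ * Real.sin θ =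
      (dPhi ω θ φ * yT m φ) * (yA n m θ * Real.sin θ) := by intro φ; unfold yY; ring
  have e4 : ∀ φ, ω θ φ * yY n (-m) θ φ * Real.sin θ =
      (ω θ φ * yT (-m) φ) * (yA n m θ * Real.sin θ) := by
    intro φ; unfold yY; rw [yA_neg]; ring
  have e5 : ∀ φ, ω θ φ * (-(m:ℝ) * yT (-m) φ) = -(m:ℝ) * (ω θ φ * yT (-m) φ) := by intro φ; ring
  simp only [e3, e4, intervalIntegral.integral_mul_const]
  simp only [e5, intervalIntegral.integral_const_mul] at key
  linear_combination (yA n m θ * Real.sin θ) * key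

lemma yfourier_zero {g : ℝ → ℝ} (hg : Continuous g) (hp : ∀ x, g (x + 2 * Real.pi) = g x)
    (h : ∀ m : ℤ, ∫ φ in (0:ℝ)..(2*Real.pi), g φ * yT m φ = 0) (x : ℝ) : g x = 0 := by
  haveI : Fact (0 < 2 * Real.pi) := ⟨by have := Real.pi_pos; positivity⟩
  have hG : Function.Periodic (fun x => (g x : ℂ)) (2 * Real.pi) := by
    intro x; simp [hp x]
  have hcont : Continuous (hG.lift : AddCircle (2 * Real.pi) → ℂ) := by
    apply continuous_coinduced_dom.mpr
    exact Complex.continuous_ofReal.comp hg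
  let F : C(AddCircle (2 * Real.pi), ℂ) := ⟨hG.lift, hcont⟩
  have hc : ∀ k : ℤ, ∫ φ in (0:ℝ)..(2*Real.pi), g φ * Real.cos ((k:ℝ) * φ) = 0 := by
    intro k
    have := h |k|
    rw [← this]; congr 1; ext φ
    simp only [yT, abs_nonneg, if_true]
    congr 1
    rcases abs_choice k with e | e <;> rw [e]
    push_cast; rw [neg_mul, Real.cos_neg]
  have hs : ∀ k : ℤ, ∫ φ in (0:ℝ)..(2*Real.pi), g φ * Real.sin ((k:ℝ) * φ) = 0 := by
    intro k
    rcases lt_trichotomy k 0 with hk | hk | hk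
    · have := h k
      simp only [yT, not_le.mpr hk, if_false, neg_mul, Real.sin_neg, mul_neg,
        intervalIntegral.integral_neg] at this
      linarith
    · subst hk; simp
    · have := h (-k)
      have hk' : ¬ (0 ≤ -k) := by omega
      simp only [yT, hk', if_false] at this
      simpa using this
  have hz : ∀ k, fourierCoeff F k = 0 := by
    intro k
    rw [fourierCoeff_eq_intervalIntegral _ _ 0, zero_add]
    have e : ∀ φ : ℝ, (fourier (-k) (φ : AddCircle (2 * Real.pi))) • F φ =
        ((g φ * Real.cos (((-k:ℤ):ℝ) * φ) : ℝ) : ℂ) +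
        Complex.I * ((g φ * Real.sin (((-k:ℤ):ℝ) * φ) : ℝ) : ℂ) := by
      intro φ
      have hF : F φ = (g φ : ℂ) := rfl
      rw [hF, fourier_coe_apply]
      have : (2 * (Real.pi:ℂ) * Complex.I * ((-k : ℤ):ℂ) * (φ:ℂ) / ((2 * Real.pi : ℝ) : ℂ))
          = (((((-k:ℤ):ℝ) * φ : ℝ)) : ℂ) * Complex.I := by
        have : (Real.pi : ℂ) ≠ 0 := by exact_mod_cast Real.pi_ne_zero
        push_cast; field_simp
      rw [this, Complex.exp_mul_I, ← Complex.ofReal_cos, ← Complex.ofReal_sin]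
      push_cast
      simp only [smul_eq_mul]; ring
    simp only [e]
    rw [intervalIntegral.integral_add, intervalIntegral.integral_const_mul,
      intervalIntegral.integral_ofReal, intervalIntegral.integral_ofReal, hc, hs]
    · simp
    · exact Continuous.intervalIntegrable (by fun_prop) _ _
    · exact Continuous.intervalIntegrable (by fun_prop) _ _
  have hsum : Summable (fourierCoeff F) := by
    rw [show fourierCoeff F = 0 from funext hz]; exact summable_zero
  have h1 := has_pointwise_sum_fourier_series_of_summable hsum (x : AddCircle (2 * Real.pi))
  simp only [hz, zero_smul] at h1
  have h2 : F x = 0 := h1.unique hasSum_zero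
  have h3 : (g x : ℂ) = 0 := h2
  exact_mod_cast h3

lemma poly_zero {h : ℝ → ℝ} (hh : Continuous h)
    (hI : ∀ q : ℝ[X], ∫ θ in (0:ℝ)..Real.pi, h θ * q.eval (Real.cos θ) = 0) :
    ∀ θ ∈ Set.Icc (0:ℝ) Real.pi, h θ = 0 := by
  have hpi := Real.pi_pos
  have hsq : ∫ θ in (0:ℝ)..Real.pi, h θ * h θ = 0 := by
    have hnn : 0 ≤ ∫ θ in (0:ℝ)..Real.pi, h θ * h θ :=
      intervalIntegral.integral_nonneg hpi.le (fun θ _ => mul_self_nonneg _)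
    set J := ∫ θ in (0:ℝ)..Real.pi, |h θ| with hJ
    have hJn : 0 ≤ J := intervalIntegral.integral_nonneg hpi.le (fun θ _ => abs_nonneg _)
    by_contra hne
    have hpos : 0 < ∫ θ in (0:ℝ)..Real.pi, h θ * h θ := lt_of_le_of_ne hnn (Ne.symm hne)
    set B := ∫ θ in (0:ℝ)..Real.pi, h θ * h θ with hB
    obtain ⟨p, hp⟩ := exists_polynomial_near_of_continuousOn (-1) 1 (fun s => h (Real.arccos s))
      (hh.comp Real.continuous_arccos).continuousOn (B / (J + 1)) (by positivity)
    have hc : Continuous (fun θ => p.eval (Real.cos θ)) := p.continuous.comp Real.continuous_cos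
    have e : B = ∫ θ in (0:ℝ)..Real.pi, h θ * (h θ - p.eval (Real.cos θ)) := by
      simp only [mul_sub]
      have i1 : IntervalIntegrable (fun θ => h θ * h θ) volume 0 Real.pi :=
        Continuous.intervalIntegrable (by fun_prop) _ _
      have i2 : IntervalIntegrable (fun θ => h θ * p.eval (Real.cos θ)) volume 0 Real.pi :=
        Continuous.intervalIntegrable (by fun_prop) _ _
      rw [intervalIntegral.integral_sub i1 i2, hI p, sub_zero]
    have hle : B ≤ ∫ θ in (0:ℝ)..Real.pi, |h θ| * (B / (J + 1)) := by
      rw [e]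
      apply intervalIntegral.integral_mono_on hpi.le
      · exact (hh.mul (hh.sub hc)).intervalIntegrable _ _
      · exact (hh.abs.mul continuous_const).intervalIntegrable _ _
      · intro θ hθ
        have h1 := hp (Real.cos θ) ⟨Real.neg_one_le_cos θ, Real.cos_le_one θ⟩
        rw [Real.arccos_cos hθ.1 hθ.2, abs_sub_comm] at h1
        calc _ ≤ |h θ * (h θ - p.eval (Real.cos θ))| := le_abs_self _
          _ = |h θ| * |h θ - p.eval (Real.cos θ)| := abs_mul _ _
          _ ≤ _ := by rw [← e]; exact mul_le_mul_of_nonneg_left h1.le (abs_nonneg _)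
    rw [intervalIntegral.integral_mul_const, ← hJ, ← mul_div_assoc,
      le_div_iff₀ (by positivity)] at hle
    nlinarith
  have := (intervalIntegral.integral_eq_zero_iff_of_le_of_nonneg_ae hpi.le
    (Filter.Eventually.of_forall (fun θ => mul_self_nonneg (h θ)))
    ((hh.mul hh).intervalIntegrable _ _)).mp hsq
  have h2 : Set.EqOn h 0 (Set.Icc 0 Real.pi) := by
    apply MeasureTheory.Measure.eqOn_Icc_of_ae_eq volume hpi.ne _ hh.continuousOn
      continuousOn_const
    have h3 : ∀ᵐ x ∂(volume.restrict (Set.Ioc 0 Real.pi)), h x = 0 := by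
      filter_upwards [this] with x hx
      exact mul_self_eq_zero.mp hx
    rw [Measure.restrict_congr_set Ioc_ae_eq_Icc] at h3
    exact h3
  exact fun θ hθ => h2 hθ

lemma complete {f : SphereFun} (hf : Continuous (Function.uncurry f)) (hp : PeriodicPhi f)
    (h : ∀ n m, m.natAbs ≤ n → sInner f (yY n m) = 0) :
    ∀ θ ∈ Set.Icc (0:ℝ) Real.pi, ∀ φ, f θ φ = 0 := by
  have hpi := Real.pi_pos
  have hin : ∀ θ ∈ Set.Ioo (0:ℝ) Real.pi, ∀ φ, f θ φ = 0 := by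
    intro θ hθ
    apply yfourier_zero (hf.comp (by fun_prop : Continuous fun φ => (θ, φ))) (hp θ)
    intro m
    let G : ℝ → ℝ := fun θ => ∫ φ in (0:ℝ)..(2*Real.pi), f θ φ * yT m φ
    have hG : Continuous G := by
      apply intervalIntegral.continuous_parametric_intervalIntegral_of_continuous'
      have := yT_cont m
      have h2 : Continuous (fun p : ℝ × ℝ => f p.1 p.2) := hf
      exact h2.mul (this.comp continuous_snd)
    have hz := poly_zero (h := fun θ => G θ * Real.sin θ ^ (m.natAbs + 1)) (by fun_prop) ?_ θ
      (Set.Ioo_subset_Icc_self hθ)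
    · have hs : Real.sin θ ≠ 0 := (Real.sin_pos_of_mem_Ioo hθ).ne'
      simpa [hs] using hz
    · intro q
      have hq : q ∈ Submodule.span ℝ
          (Set.range fun i => derivative^[m.natAbs] (pL (m.natAbs + i))) := by
        rw [pL_span]; trivial
      have hcq : ∀ q : ℝ[X], Continuous (fun θ => G θ * Real.sin θ ^ (m.natAbs + 1) *
          q.eval (Real.cos θ)) := by
        intro q
        have := q.continuous
        fun_prop
      induction hq using Submodule.span_induction with
      | mem q hq =>
        obtain ⟨i, rfl⟩ := hq
        have h1 := h (m.natAbs + i) m (by omega)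
        rw [sInner_swap hf (yY_cont _ _)] at h1
        have e : ∀ θ φ, f θ φ * yY (m.natAbs + i) m θ φ * Real.sin θ =
          (f θ φ * yT m φ) * (yK (m.natAbs + i) m * (Real.sin θ ^ (m.natAbs + 1) *
            (derivative^[m.natAbs] (pL (m.natAbs + i))).eval (Real.cos θ))) := by
          intro θ φ; unfold yY yA; ring
        simp only [e, intervalIntegral.integral_mul_const] at h1
        have e2 : ∀ θ, (∫ φ in (0:ℝ)..(2*Real.pi), f θ φ * yT m φ) *
          (yK (m.natAbs + i) m * (Real.sin θ ^ (m.natAbs + 1) *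
            (derivative^[m.natAbs] (pL (m.natAbs + i))).eval (Real.cos θ))) =
            yK (m.natAbs + i) m * (G θ * Real.sin θ ^ (m.natAbs + 1) *
            (derivative^[m.natAbs] (pL (m.natAbs + i))).eval (Real.cos θ)) := by
          intro θ; simp only [G]; ring
        simp only [e2, intervalIntegral.integral_const_mul] at h1
        simpa [(yK_pos (m.natAbs + i) m).ne'] using h1
      | zero => simp
      | add p q _ _ hp hq =>
        simp only [eval_add, mul_add]
        rw [intervalIntegral.integral_add ((hcq p).intervalIntegrable _ _)
          ((hcq q).intervalIntegrable _ _), hp, hq, add_zero]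
      | smul a p _ hp =>
        simp only [eval_smul, smul_eq_mul, mul_left_comm _ a]
        rw [intervalIntegral.integral_const_mul, hp, mul_zero]
  intro θ hθ φ
  have hcl : θ ∈ closure (Set.Ioo (0:ℝ) Real.pi) := by
    rw [closure_Ioo hpi.ne]; exact hθ
  have hcl2 : IsClosed {θ | f θ φ = 0} :=
    isClosed_eq (hf.comp (by fun_prop : Continuous fun θ => (θ, φ))) continuous_const
  exact hcl2.closure_subset_iff.mpr (fun θ hθ => hin θ hθ φ) hcl

lemma yY_apply (n : ℕ) (m : ℤ) (θ φ : ℝ) : yY n m θ φ = yA n m θ * yT m φ := rfl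

lemma yY_cont' (n : ℕ) (m : ℤ) : Continuous (fun q : ℝ × ℝ => yY n m q.2 q.1) := by
  have h1 := yA_cont n m
  have h2 := yT_cont m
  simp only [yY_apply]
  fun_prop

lemma yY_cont2 (n : ℕ) (m : ℤ) : Continuous (fun q : ℝ × ℝ => yY n m q.1 q.2) := by
  have h1 := yA_cont n m
  have h2 := yT_cont m
  simp only [yY_apply]
  fun_prop

lemma sum_w1 : Summable (fun n : ℕ => 1 / ((n:ℝ) + 1) ^ 2) := by
  have h : Summable (fun n : ℕ => 1 / (n:ℝ) ^ 2) := Real.summable_one_div_nat_pow.mpr one_lt_two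
  have h' := (summable_nat_add_iff 1).mpr h
  refine h'.congr (fun n => ?_)
  push_cast
  rfl

lemma sum_w2 : Summable (fun m : ℤ => 1 / (|(m:ℝ)| + 1) ^ 2) := by
  apply Summable.of_nat_of_neg
  · refine sum_w1.congr (fun n => ?_)
    rw [Int.cast_natCast, abs_of_nonneg (Nat.cast_nonneg n)]
  · refine sum_w1.congr (fun n => ?_)
    rw [Int.cast_neg, Int.cast_natCast, abs_neg, abs_of_nonneg (Nat.cast_nonneg n)]

lemma sM_ae {P : ℝ → Prop} (h : ∀ᵐ θ ∂(volume.restrict (Set.Ioc 0 Real.pi)), P θ) :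
    ∀ᵐ q ∂sM, P q.2 :=
  Measure.quasiMeasurePreserving_snd.ae h

lemma sM_mem : ∀ᵐ q ∂sM, q.2 ∈ Set.Ioc 0 Real.pi := sM_ae (ae_restrict_mem measurableSet_Ioc)

lemma sum_weight : Summable (fun p : ℕ × ℤ =>
    (1 / ((p.1:ℝ) + 1) ^ 2) * (1 / (|(p.2:ℝ)| + 1) ^ 2)) := by
  have h := Summable.mul_of_nonneg sum_w1 sum_w2 (fun n => by positivity) (fun n => by positivity)
  exact h

def aC (ω : SphereFun) (p : ℕ × ℤ) : ℝ := if 1 ≤ p.1 ∧ |p.2| ≤ (p.1 : ℤ) then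
    (-(1:ℝ)/((p.1:ℝ)*((p.1:ℝ)+1))) * coeff (dPhi ω) p.1 p.2 else 0

lemma aC_summable {ω : SphereFun} (h : SphSmooth ω) (hp : PeriodicPhi ω)
    (hH2 : sobNormSq 2 ω < ⊤) : Summable (fun p => |aC ω p|) := by
  have h1 := ENNReal.summable_toReal hH2.ne
  have h2 := h1.comp_injective (i := fun p : ℕ × ℤ => (p.1, -p.2))
    (by rintro ⟨a, b⟩ ⟨c, d⟩ h; simpa using h)
  refine Summable.of_nonneg_of_le (fun _ => abs_nonneg _) ?_ (h2.add (sum_weight.mul_left 4))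
  rintro ⟨n, m⟩
  simp only [Function.comp, aC, abs_neg]
  split_ifs with h3 h4 h4
  · have hμ : 0 < muSp n := by unfold muSp; positivity
    rw [ENNReal.toReal_ofReal (by positivity), coeff_dPhi h hp]
    set w := coeff ω n (-m)
    have hn : (1:ℝ) ≤ n := by exact_mod_cast h3.1
    have hm : |(m:ℝ)| ≤ n := by exact_mod_cast h3.2
    have e1 : |-(1:ℝ) / ((n:ℝ) * (n + 1)) * (m * w)| ≤ |w| := by
      rw [abs_mul, abs_mul, abs_div, abs_neg, abs_one, abs_of_pos (by positivity : 0 < (n:ℝ) * (n+1)),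
        ← mul_assoc]
      have : 1 / ((n:ℝ) * (n + 1)) * |(m:ℝ)| ≤ 1 := by
        rw [one_div_mul_eq_div, div_le_one (by positivity)]
        nlinarith
      nlinarith [abs_nonneg w]
    have e2 : |w| ≤ (muSp n) ^ 2 * w ^ 2 + 1 / (muSp n) ^ 2 := by
      have a1 : |w| = (muSp n * |w|) * (1 / muSp n) := by field_simp
      have a2 : (muSp n) ^ 2 * w ^ 2 = (muSp n * |w|) ^ 2 := by rw [mul_pow, sq_abs]
      have a3 : 1 / (muSp n) ^ 2 = (1 / muSp n) ^ 2 := by rw [div_pow, one_pow]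
      rw [a2, a3]
      nlinarith [sq_nonneg (muSp n * |w| - 1 / muSp n), sq_nonneg (muSp n * |w|),
        sq_nonneg (1 / muSp n)]
    have e3 : 1 / (muSp n) ^ 2 ≤ 4 * (1 / ((n:ℝ) + 1) ^ 2 * (1 / (|(m:ℝ)| + 1) ^ 2)) := by
      have b1 : ((n:ℝ) + 1) ^ 2 / 2 ≤ muSp n := by unfold muSp; nlinarith
      have b2 : ((n:ℝ) + 1) ^ 2 * (|(m:ℝ)| + 1) ^ 2 / 4 ≤ (muSp n) ^ 2 := by
        have c1 : (|(m:ℝ)| + 1) ^ 2 ≤ ((n:ℝ) + 1) ^ 2 := by gcongr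
        calc _ ≤ ((n:ℝ) + 1) ^ 2 * ((n:ℝ) + 1) ^ 2 / 4 := by gcongr
          _ = (((n:ℝ) + 1) ^ 2 / 2) ^ 2 := by ring
          _ ≤ _ := by gcongr
      calc _ ≤ 1 / (((n:ℝ) + 1) ^ 2 * (|(m:ℝ)| + 1) ^ 2 / 4) :=
            one_div_le_one_div_of_le (by positivity) b2
        _ = _ := by field_simp
    linarith
  · exact absurd h3.2 h4
  · rw [abs_zero]
    positivity
  · simp
    positivity

lemma invLap_eq (ω : SphereFun) (θ : ℝ) (hθ : θ ∈ Set.Icc (0:ℝ) Real.pi) (φ : ℝ) :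
    invLap (dPhi ω) θ φ = ∑' p : ℕ × ℤ, aC ω p * yY p.1 p.2 θ φ := by
  unfold invLap
  congr 1; ext p
  unfold aC
  split_ifs
  · rw [Ynm_eq _ _ θ hθ φ, yY_apply]
  · simp

lemma coeff_rel {ω : SphereFun} (h : SphSmooth ω) (hp : PeriodicPhi ω)
    (hH2 : sobNormSq 2 ω < ⊤)
    (hae : ∀ᵐ q ∂sM, dPhi ω q.2 q.1 + 6 * invLap (dPhi ω) q.2 q.1 = 0)
    (n : ℕ) (m : ℤ) (hm : m.natAbs ≤ n) (hn : 1 ≤ n) :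
    coeff (dPhi ω) n m = 6 / ((n:ℝ) * (n + 1)) * coeff (dPhi ω) n m := by
  have hY : ∀ n m, Continuous (fun q : ℝ × ℝ => yY n m q.2 q.1) :=
    fun n m => yY_cont' n m
  let F : ℕ × ℤ → ℝ × ℝ → ℝ := fun p q =>
    aC ω p * (yY p.1 p.2 q.2 q.1 * yY n m q.2 q.1 * Real.sin q.2)
  have hc : ∀ n m n' m', Continuous (fun q : ℝ × ℝ =>
      yY n m q.2 q.1 * yY n' m' q.2 q.1 * Real.sin q.2) := by
    intro n m n' m'
    have := hY n m
    have := hY n' m'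
    fun_prop
  have hFi : ∀ p, Integrable (F p) sM := fun p => (sM_integrable (hc _ _ _ _)).const_mul _
  have hone : ∀ n m, m.natAbs ≤ n →
      ∫ q, yY n m q.2 q.1 * yY n m q.2 q.1 * Real.sin q.2 ∂sM = 1 := by
    intro n m hm
    rw [← sInner_eq (yY_cont n m) (yY_cont n m), yY_orth n n m m hm]; simp
  have hFs : Summable (fun p => ∫ q, ‖F p q‖ ∂sM) := by
    refine Summable.of_nonneg_of_le (fun p => integral_nonneg (fun _ => norm_nonneg _)) ?_
      (aC_summable h hp hH2)
    intro p
    by_cases h0 : aC ω p = 0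
    · simp [F, h0]
    have hv : p.2.natAbs ≤ p.1 := by
      by_contra hcon
      apply h0
      unfold aC
      rw [if_neg]
      rintro ⟨_, h2⟩
      rw [Int.abs_eq_natAbs] at h2
      omega
    have : ∫ q, ‖F p q‖ ∂sM ≤ ∫ q, |aC ω p| * (1/2 *
        (yY p.1 p.2 q.2 q.1 * yY p.1 p.2 q.2 q.1 * Real.sin q.2) +
        1/2 * (yY n m q.2 q.1 * yY n m q.2 q.1 * Real.sin q.2)) ∂sM := by
      apply integral_mono_ae (hFi p).norm
      · exact (((sM_integrable (hc _ _ _ _)).const_mul _).add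
          ((sM_integrable (hc _ _ _ _)).const_mul _)).const_mul _
      · filter_upwards [sM_mem] with q hq
        have hs : 0 ≤ Real.sin q.2 := Real.sin_nonneg_of_mem_Icc ⟨hq.1.le, hq.2⟩
        simp only [F, norm_mul, Real.norm_eq_abs, abs_of_nonneg hs]
        apply mul_le_mul_of_nonneg_left _ (abs_nonneg _)
        have : |yY p.1 p.2 q.2 q.1| * |yY n m q.2 q.1| ≤ 1/2 * (yY p.1 p.2 q.2 q.1 *
          yY p.1 p.2 q.2 q.1) + 1/2 * (yY n m q.2 q.1 * yY n m q.2 q.1) := by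
          rw [← abs_mul_abs_self (yY p.1 p.2 q.2 q.1), ← abs_mul_abs_self (yY n m q.2 q.1)]
          nlinarith [sq_nonneg (|yY p.1 p.2 q.2 q.1| - |yY n m q.2 q.1|)]
        nlinarith
    refine this.trans ?_
    rw [integral_const_mul, integral_add ((sM_integrable (hc _ _ _ _)).const_mul _)
      ((sM_integrable (hc _ _ _ _)).const_mul _), integral_const_mul, integral_const_mul,
      hone _ _ hv, hone _ _ hm]
    norm_num
  have key := hasSum_integral_of_summable_integral_norm hFi hFs
  have e1 : ∀ p : ℕ × ℤ, ∫ q, F p q ∂sM = if p = (n, m) then aC ω (n, m) else 0 := by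
    intro p
    simp only [F]
    rw [integral_const_mul, ← sInner_eq (yY_cont _ _) (yY_cont _ _)]
    by_cases h0 : aC ω p = 0
    · rw [h0, zero_mul]
      split_ifs with h1
      · rw [← h1, h0]
      · rfl
    have hv : p.2.natAbs ≤ p.1 := by
      by_contra hcon
      apply h0
      unfold aC
      rw [if_neg]
      rintro ⟨_, h2⟩
      rw [Int.abs_eq_natAbs] at h2
      omega
    rw [yY_orth _ _ _ _ hv]
    by_cases h1 : p = (n, m)
    · subst h1; simp
    · have : ¬ (p.1 = n ∧ p.2 = m) := fun h => h1 (Prod.ext h.1 h.2)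
      simp [h1, this]
  simp only [e1] at key
  have k2 := key.unique (hasSum_ite_eq (n, m) (aC ω (n, m)))
  have e2 : coeff (dPhi ω) n m = -6 * ∫ q, (∑' p, F p q) ∂sM := by
    rw [coeff_eq, sInner_eq (dPhi_cont h) (yY_cont n m), ← integral_const_mul]
    apply integral_congr_ae
    filter_upwards [sM_mem, hae] with q hq h1
    rw [invLap_eq ω q.2 ⟨hq.1.le, hq.2⟩] at h1
    have : ∑' p, F p q = (∑' p : ℕ × ℤ, aC ω p * yY p.1 p.2 q.2 q.1) *
        (yY n m q.2 q.1 * Real.sin q.2) := by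
      rw [← tsum_mul_right]
      congr 1; ext p; simp only [F]; ring
    rw [this]
    linear_combination (yY n m q.2 q.1 * Real.sin q.2) * h1
  have e3 : aC ω (n, m) = -(1:ℝ)/((n:ℝ)*((n:ℝ)+1)) * coeff (dPhi ω) n m := by
    unfold aC
    rw [if_pos]
    refine ⟨hn, ?_⟩
    simp only [Int.abs_eq_natAbs]; omega
  rw [k2, e3] at e2
  refine e2.trans ?_
  ring

lemma factor_ae (β γ : ℝ) (hβγ : 0 < β^2 + γ^2) : ∀ᵐ q ∂sM,
    (3*β*Real.sqrt (5/Real.pi) * Real.cos q.2 + γ*Real.sqrt (3/Real.pi)) ≠ 0 := by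
  have hpi := Real.pi_pos
  have h5 : 0 < Real.sqrt (5/Real.pi) := by positivity
  have h3 : 0 < Real.sqrt (3/Real.pi) := by positivity
  by_cases hβ : β = 0
  · subst hβ
    have hγ : γ ≠ 0 := by rintro rfl; simp at hβγ
    refine Filter.Eventually.of_forall (fun q => ?_)
    simp only [mul_zero, zero_mul, zero_add]
    exact mul_ne_zero hγ h3.ne'
  · have hne := sM_ae (P := fun θ => θ ≠ Real.arccos (-(γ*Real.sqrt (3/Real.pi)) /
      (3*β*Real.sqrt (5/Real.pi)))) (ae_restrict_of_ae (Measure.ae_ne volume _))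
    filter_upwards [sM_mem, hne] with q hq h1 h2
    apply h1
    have hb : 3*β*Real.sqrt (5/Real.pi) ≠ 0 := mul_ne_zero (mul_ne_zero three_ne_zero hβ) h5.ne'
    rw [← Real.arccos_cos hq.1.le hq.2]
    congr 1
    rw [eq_div_iff hb]; linarith

lemma sInner_sub_sum {f v : SphereFun} (hf : Continuous (Function.uncurry f))
    (hv : Continuous (Function.uncurry v)) (c : ℤ → ℝ) (s : Finset ℤ) :
    sInner (fun θ φ => f θ φ - ∑ k ∈ s, c k * yY 2 k θ φ) v =
      sInner f v - ∑ k ∈ s, c k * sInner (yY 2 k) v := by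
  have hf' : Continuous (fun q : ℝ × ℝ => f q.2 q.1) := hf.comp continuous_swap
  have hv' : Continuous (fun q : ℝ × ℝ => v q.2 q.1) := hv.comp continuous_swap
  have hY : ∀ k, Continuous (fun q : ℝ × ℝ => yY 2 k q.2 q.1) :=
    fun k => yY_cont' 2 k
  have hY' : ∀ k, Continuous (fun q : ℝ × ℝ => yY 2 k q.1 q.2) := fun k => yY_cont2 2 k
  have hr : Continuous (Function.uncurry (fun θ φ => f θ φ - ∑ k ∈ s, c k * yY 2 k θ φ)) := by
    change Continuous (fun p : ℝ × ℝ => f p.1 p.2 - ∑ k ∈ s, c k * yY 2 k p.1 p.2)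
    have : Continuous (fun p : ℝ × ℝ => f p.1 p.2) := hf
    fun_prop
  rw [sInner_eq hr hv, sInner_eq hf hv]
  have i1 : ∀ k, Integrable (fun q : ℝ × ℝ =>
      c k * (yY 2 k q.2 q.1 * v q.2 q.1 * Real.sin q.2)) sM := fun k =>
    sM_integrable (by have := hY k; fun_prop)
  have e : ∑ k ∈ s, c k * sInner (yY 2 k) v = ∫ q, ∑ k ∈ s,
      c k * (yY 2 k q.2 q.1 * v q.2 q.1 * Real.sin q.2) ∂sM := by
    rw [integral_finsetSum _ (fun k _ => i1 k)]
    apply Finset.sum_congr rfl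
    intro k _
    rw [integral_const_mul, sInner_eq (yY_cont 2 k) hv]
  rw [e, ← integral_sub (sM_integrable (by fun_prop)) (integrable_finsetSum _ (fun k _ => i1 k))]
  congr 1; ext q
  rw [sub_mul, sub_mul, Finset.sum_mul, Finset.sum_mul]
  congr 1
  apply Finset.sum_congr rfl
  intro k _; ring

lemma sum_orth (c : ℤ → ℝ) (n : ℕ) (m : ℤ) (hm : m.natAbs ≤ n) :
    ∑ k ∈ Finset.Icc (-2:ℤ) 2, c k * sInner (yY 2 k) (yY n m) = if n = 2 then c m else 0 := by
  have : ∀ k ∈ Finset.Icc (-2:ℤ) 2, c k * sInner (yY 2 k) (yY n m) =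
      if m = k then (if n = 2 then c m else 0) else 0 := by
    intro k hk
    rw [Finset.mem_Icc] at hk
    rw [yY_orth _ _ _ _ (by omega)]
    by_cases h1 : m = k
    · subst h1
      by_cases h2 : n = 2
      · simp [h2]
      · simp [h2, Ne.symm h2]
    · simp [h1, Ne.symm h1]
  rw [Finset.sum_congr rfl this, Finset.sum_ite_eq]
  by_cases h2 : n = 2
  · rw [if_pos]
    rw [Finset.mem_Icc]; omega
  · simp [h2]

lemma sum_reflect (c : ℤ → ℝ) (θ φ : ℝ) :
    ∑ k ∈ Finset.Icc (-2:ℤ) 2, c k * (yA 2 k θ * (-(k:ℝ) * yT (-k) φ)) =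
    ∑ k ∈ Finset.Icc (-2:ℤ) 2, ((k:ℝ) * c (-k)) * yY 2 k θ φ := by
  have : Finset.Icc (-2:ℤ) 2 = {-2, -1, 0, 1, 2} := rfl
  have h1 := congrFun (yA_neg 2 1) θ
  have h2 := congrFun (yA_neg 2 2) θ
  rw [this]
  simp [yY_apply, h1, h2]
  ring

lemma sum_deriv (c : ℤ → ℝ) (θ φ : ℝ) :
    HasDerivAt (fun p => ∑ k ∈ Finset.Icc (-2:ℤ) 2, c k * yY 2 k θ p)
      (∑ k ∈ Finset.Icc (-2:ℤ) 2, ((k:ℝ) * c (-k)) * yY 2 k θ φ) φ := by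
  rw [← sum_reflect]
  apply HasDerivAt.fun_sum
  intro k _
  simp only [yY_apply]
  exact ((yT_deriv k φ).const_mul _).const_mul _

lemma Ysum_eq (c : ℤ → ℝ) (θ : ℝ) (hθ : θ ∈ Set.Icc (0:ℝ) Real.pi) (φ : ℝ) :
    ∑ m ∈ Finset.Icc (-2 : ℤ) 2, c m * Ynm 2 m θ φ =
    ∑ m ∈ Finset.Icc (-2 : ℤ) 2, c m * yY 2 m θ φ :=
  Finset.sum_congr rfl (fun m _ => by rw [Ynm_eq 2 m θ hθ φ, yY_apply])

lemma ae_of_L {β γ : ℝ} (hβγ : 0 < β^2 + γ^2) {ω : SphereFun}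
    (hL : ∀ θ ∈ Set.Icc (0:ℝ) Real.pi, ∀ φ : ℝ, Lop β γ ω θ φ = 0) :
    ∀ᵐ q ∂sM, dPhi ω q.2 q.1 + 6 * invLap (dPhi ω) q.2 q.1 = 0 := by
  filter_upwards [sM_mem, factor_ae β γ hβγ] with q hq hne
  have h := hL q.2 ⟨hq.1.le, hq.2⟩ q.1
  unfold Lop at h
  rcases mul_eq_zero.mp h with h | h
  · exfalso
    rcases mul_eq_zero.mp h with h | h
    · norm_num at h
    · exact hne h
  · exact h

lemma coeff_zero {ω : SphereFun} (h : SphSmooth ω) (hp : PeriodicPhi ω)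
    (hH2 : sobNormSq 2 ω < ⊤)
    (hae : ∀ᵐ q ∂sM, dPhi ω q.2 q.1 + 6 * invLap (dPhi ω) q.2 q.1 = 0)
    (n : ℕ) (m : ℤ) (hm : m.natAbs ≤ n) (hn : n ≠ 2) : coeff (dPhi ω) n m = 0 := by
  rcases Nat.eq_zero_or_pos n with h0 | h0
  · have : m = 0 := by omega
    rw [coeff_dPhi h hp, this]; simp
  · have hr := coeff_rel h hp hH2 hae n m hm h0
    have hn0 : (0:ℝ) < n := by exact_mod_cast h0
    by_contra hc
    have h1 : 6 / ((n:ℝ) * (n + 1)) = 1 := by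
      apply mul_right_cancel₀ hc
      rw [one_mul, ← hr]
    rw [div_eq_one_iff_eq (by positivity)] at h1
    have h2 : 6 = n * (n + 1) := by exact_mod_cast h1
    have h3 : n ≤ 2 := by nlinarith
    interval_cases n <;> omega

lemma dPhi_eq {ω : SphereFun} (h : SphSmooth ω) (hp : PeriodicPhi ω)
    (hH2 : sobNormSq 2 ω < ⊤)
    (hae : ∀ᵐ q ∂sM, dPhi ω q.2 q.1 + 6 * invLap (dPhi ω) q.2 q.1 = 0)
    (θ : ℝ) (hθ : θ ∈ Set.Icc (0:ℝ) Real.pi) (φ : ℝ) :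
    dPhi ω θ φ = ∑ k ∈ Finset.Icc (-2:ℤ) 2, ((k:ℝ) * coeff ω 2 (-k)) * yY 2 k θ φ := by
  have hY' : ∀ k, Continuous (fun q : ℝ × ℝ => yY 2 k q.1 q.2) := fun k => yY_cont2 2 k
  have hd := dPhi_cont h
  have hr : Continuous (Function.uncurry (fun θ φ => dPhi ω θ φ -
      ∑ k ∈ Finset.Icc (-2:ℤ) 2, ((k:ℝ) * coeff ω 2 (-k)) * yY 2 k θ φ)) := by
    change Continuous (fun p : ℝ × ℝ => dPhi ω p.1 p.2 -
      ∑ k ∈ Finset.Icc (-2:ℤ) 2, ((k:ℝ) * coeff ω 2 (-k)) * yY 2 k p.1 p.2)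
    have : Continuous (fun p : ℝ × ℝ => dPhi ω p.1 p.2) := hd
    fun_prop
  have := complete hr ?_ ?_ θ hθ φ
  · linarith
  · intro θ φ
    simp only [yY_apply, yT_per, dPhi_per hp θ φ]
  · intro n m hm
    rw [sInner_sub_sum hd (yY_cont n m) (fun k => (k:ℝ) * coeff ω 2 (-k)), sum_orth _ n m hm,
      ← coeff_eq]
    split_ifs with h2
    · subst h2
      rw [coeff_dPhi h hp, sub_self]
    · rw [coeff_zero h hp hH2 hae n m hm h2, sub_zero]

lemma fwd {ω : SphereFun} (h : SphSmooth ω) (hp : PeriodicPhi ω)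
    (hH2 : sobNormSq 2 ω < ⊤)
    (hae : ∀ᵐ q ∂sM, dPhi ω q.2 q.1 + 6 * invLap (dPhi ω) q.2 q.1 = 0)
    (θ : ℝ) (hθ : θ ∈ Set.Icc (0:ℝ) Real.pi) (φ : ℝ) :
    ω θ φ = (ω θ 0 - ∑ k ∈ Finset.Icc (-2:ℤ) 2, coeff ω 2 k * yY 2 k θ 0) +
      ∑ k ∈ Finset.Icc (-2:ℤ) 2, coeff ω 2 k * yY 2 k θ φ := by
  have hD : ∀ p, HasDerivAt (fun p => ω θ p -
      ∑ k ∈ Finset.Icc (-2:ℤ) 2, coeff ω 2 k * yY 2 k θ p) 0 p := by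
    intro p
    have h1 := (dPhi_hasDeriv h θ p).sub (sum_deriv (fun k => coeff ω 2 k) θ p)
    rw [dPhi_eq h hp hH2 hae θ hθ p, sub_self] at h1
    exact h1
  have := is_const_of_deriv_eq_zero (fun p => (hD p).differentiableAt) (fun p => (hD p).deriv) φ 0
  linarith

lemma bwd_d {ω z : SphereFun} {c : ℤ → ℝ} (hz : Zonal z)
    (he : ∀ θ ∈ Set.Icc (0:ℝ) Real.pi, ∀ φ : ℝ,
        ω θ φ = z θ φ + ∑ m ∈ Finset.Icc (-2 : ℤ) 2, c m * Ynm 2 m θ φ)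
    (θ : ℝ) (hθ : θ ∈ Set.Icc (0:ℝ) Real.pi) (φ : ℝ) :
    dPhi ω θ φ = ∑ k ∈ Finset.Icc (-2:ℤ) 2, ((k:ℝ) * c (-k)) * yY 2 k θ φ := by
  have e : (fun p => ω θ p) = fun p => z θ 0 + ∑ m ∈ Finset.Icc (-2 : ℤ) 2, c m * yY 2 m θ p := by
    ext p
    rw [he θ hθ p, Ysum_eq c θ hθ p, hz θ p 0]
  unfold dPhi
  rw [e]
  exact ((sum_deriv c θ φ).const_add _).deriv

lemma bwd_coeff {u : SphereFun} {b : ℤ → ℝ}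
    (he : ∀ θ ∈ Set.Icc (0:ℝ) Real.pi, ∀ φ : ℝ,
        u θ φ = ∑ k ∈ Finset.Icc (-2 : ℤ) 2, b k * yY 2 k θ φ)
    (n : ℕ) (m : ℤ) (hm : m.natAbs ≤ n) : coeff u n m = if n = 2 then b m else 0 := by
  have h1 : sInner u (yY n m) = sInner (fun θ φ => (fun _ _ => 0 : SphereFun) θ φ -
      ∑ k ∈ Finset.Icc (-2 : ℤ) 2, (-b k) * yY 2 k θ φ) (yY n m) := by
    apply sInner_congr _ (fun _ _ _ => rfl)
    intro θ hθ φ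
    rw [he θ hθ φ]
    simp
  have h0 : sInner (fun _ _ => 0 : SphereFun) (yY n m) = 0 := by
    unfold sInner; simp
  have hc : Continuous (Function.uncurry (fun _ _ => 0 : SphereFun)) := by
    change Continuous (fun _ : ℝ × ℝ => (0:ℝ))
    exact continuous_const
  rw [coeff_eq, h1, sInner_sub_sum hc (yY_cont n m) (fun k => -b k), sum_orth _ n m hm, h0]
  split_ifs <;> simp

lemma bwd {ω : SphereFun} {b : ℤ → ℝ}
    (he : ∀ θ ∈ Set.Icc (0:ℝ) Real.pi, ∀ φ : ℝ,
        dPhi ω θ φ = ∑ k ∈ Finset.Icc (-2 : ℤ) 2, b k * yY 2 k θ φ)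
    (θ : ℝ) (hθ : θ ∈ Set.Icc (0:ℝ) Real.pi) (φ : ℝ) :
    dPhi ω θ φ + 6 * invLap (dPhi ω) θ φ = 0 := by
  rw [invLap_eq ω θ hθ, he θ hθ φ, tsum_eq_sum (s := ({2} : Finset ℕ) ×ˢ Finset.Icc (-2:ℤ) 2),
    Finset.sum_product, Finset.sum_singleton, Finset.mul_sum, ← Finset.sum_add_distrib]
  · apply Finset.sum_eq_zero
    intro k hk
    rw [Finset.mem_Icc] at hk
    have : aC ω (2, k) = -(1/6) * b k := by
      unfold aC
      rw [if_pos, bwd_coeff he 2 k (by omega)]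
      · norm_num
      · simp only [Int.abs_eq_natAbs]; omega
    rw [this]
    ring
  · rintro ⟨n, m⟩ hnm
    have : aC ω (n, m) = 0 := by
      unfold aC
      split_ifs with h
      · simp only [Int.abs_eq_natAbs] at h
        rw [bwd_coeff he n m (by omega), if_neg, mul_zero]
        rintro rfl
        apply hnm
        have h2 := h.2
        exact Finset.mem_product.mpr ⟨Finset.mem_singleton_self _,
          Finset.mem_Icc.mpr ⟨by change -2 ≤ m; omega, by change m ≤ 2; omega⟩⟩
      · rfl
    rw [this, zero_mul]

end KerHelpers

/-- The kernel of the linearized operator `L` consists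
exactly of the sums of a zonal function and an element of
`span{Y₂^m : |m| ≤ 2}`. -/
theorem kernel_of_linearized_operator (β γ : ℝ) (hβγ : 0 < β^2 + γ^2)
    (ω : SphereFun) (hsm : SphSmooth ω) (hper : PeriodicPhi ω)
    (hH2 : sobNormSq 2 ω < ⊤) (hmean : coeff ω 0 0 = 0) :
    (∀ θ ∈ Set.Icc (0:ℝ) Real.pi, ∀ φ : ℝ, Lop β γ ω θ φ = 0) ↔
    ∃ (z : SphereFun) (c : ℤ → ℝ), Zonal z ∧
      ∀ θ ∈ Set.Icc (0:ℝ) Real.pi, ∀ φ : ℝ,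
        ω θ φ = z θ φ + ∑ m ∈ Finset.Icc (-2 : ℤ) 2, c m * Ynm 2 m θ φ := by
  constructor
  · intro hL
    have hae := ae_of_L hβγ hL
    refine ⟨fun θ _ => ω θ 0 - ∑ k ∈ Finset.Icc (-2:ℤ) 2, coeff ω 2 k * yY 2 k θ 0,
      fun k => coeff ω 2 k, fun _ _ _ => rfl, fun θ hθ φ => ?_⟩
    rw [Ysum_eq (fun k => coeff ω 2 k) θ hθ φ]
    exact fwd hsm hper hH2 hae θ hθ φ
  · rintro ⟨z, c, hz, he⟩ θ hθ φ
    unfold Lop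
    rw [bwd (b := fun k => (k:ℝ) * c (-k)) (fun θ hθ φ => bwd_d hz he θ hθ φ) θ hθ φ, mul_zero]
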